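/- arXiv:2405.07119 — 7 statements merged into one kernel-verified Lean document; each statement's English description precedes it below -/
import Mathlib

section
/- Consider an ICQS instance. Suppose P1 is a proximity bound for Q1 and P2 is a proximity bound for Q2, and suppose there is s ≥ 0 with ‖R1v‖ ≤ s‖v‖ for all v ∈ ℝ^{n_y} and ‖R2w‖ ≤ s‖w‖ for all w ∈ ℝ^{n_x}. Let x ∈ ℤ^{n_x}, y ∈ ℤ^{n_y}, let x' ∈ ℤ^{n_x} be any minimizer of f1(·,y) over ℤ^{n_x}, and let y' ∈ ℤ^{n_y} be any minimizer of f2(x,·) over ℤ^{n_y}. Then ‖(x',y')‖ ≤ s·‖(x,y)‖ + ‖(Q1⁻¹d1, Q2⁻¹d2)‖ + sqrt(P1² + P2²). -/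
/-!
By proximity, `x'` lies within `P1` of `-Q1⁻¹(C1 y + d1) = -(R1 y + Q1⁻¹ d1)`, so
`‖x'‖ ≤ s‖y‖ + ‖Q1⁻¹ d1‖ + P1` (`euclNorm_best_response_le`), and symmetrically
`‖y'‖ ≤ s‖x‖ + ‖Q2⁻¹ d2‖ + P2`. The bound on the pair then follows by applying Minkowski's
inequality in the plane (`sqrt_sq_add_sq_le`) to the three vectors `(s‖y‖, s‖x‖)`,
`(‖Q1⁻¹ d1‖, ‖Q2⁻¹ d2‖)` and `(P1, P2)`.
-/

open Matrix

/-- Coercion of an integer vector to a real vector. -/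
def ic {n : ℕ} (v : Fin n → ℤ) : Fin n → ℝ := fun i => (v i : ℝ)

/-- Euclidean norm of a real vector. -/
noncomputable def euclNorm {n : ℕ} (x : Fin n → ℝ) : ℝ := Real.sqrt (∑ i, x i ^ 2)

/-- Norm of a pair of vectors: `√(‖x‖² + ‖y‖²)`. -/
noncomputable def pairNorm {m n : ℕ} (x : Fin m → ℝ) (y : Fin n → ℝ) : ℝ :=
  Real.sqrt (euclNorm x ^ 2 + euclNorm y ^ 2)

/-- Cost of the x-player: `f1(x,y) = (1/2)xᵀQ1x + (C1 y + d1)ᵀx`. -/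
noncomputable def f1 {nx ny : ℕ} (Q1 : Matrix (Fin nx) (Fin nx) ℝ)
    (C1 : Matrix (Fin nx) (Fin ny) ℝ) (d1 : Fin nx → ℝ)
    (x : Fin nx → ℝ) (y : Fin ny → ℝ) : ℝ :=
  (1 / 2) * (x ⬝ᵥ Q1 *ᵥ x) + (C1 *ᵥ y + d1) ⬝ᵥ x

/-- Cost of the y-player: `f2(x,y) = (1/2)yᵀQ2y + (C2 x + d2)ᵀy`. -/
noncomputable def f2 {nx ny : ℕ} (Q2 : Matrix (Fin ny) (Fin ny) ℝ)
    (C2 : Matrix (Fin ny) (Fin nx) ℝ) (d2 : Fin ny → ℝ)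
    (x : Fin nx → ℝ) (y : Fin ny → ℝ) : ℝ :=
  (1 / 2) * (y ⬝ᵥ Q2 *ᵥ y) + (C2 *ᵥ x + d2) ⬝ᵥ y

/-- `P` is a proximity bound for `Q`: every integer minimizer of
`(1/2)xᵀQx + cᵀx` is within distance `P` of the continuous minimizer `-Q⁻¹c`. -/
def IsProxBound {n : ℕ} (Q : Matrix (Fin n) (Fin n) ℝ) (P : ℝ) : Prop :=
  0 ≤ P ∧ ∀ (c : Fin n → ℝ) (v : Fin n → ℤ),
    (∀ w : Fin n → ℤ,
      (1 / 2) * (ic v ⬝ᵥ Q *ᵥ ic v) + c ⬝ᵥ ic v ≤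
      (1 / 2) * (ic w ⬝ᵥ Q *ᵥ ic w) + c ⬝ᵥ ic w) →
    euclNorm (ic v + Q⁻¹ *ᵥ c) ≤ P

lemma euclNorm_eq_norm {n : ℕ} (x : Fin n → ℝ) : euclNorm x = ‖WithLp.toLp 2 x‖ := by
  simp [euclNorm, EuclideanSpace.norm_eq]

lemma euclNorm_nonneg {n : ℕ} (x : Fin n → ℝ) : 0 ≤ euclNorm x := Real.sqrt_nonneg _

/-- Minkowski's inequality in the Euclidean plane. -/
lemma sqrt_sq_add_sq_le (a b c d : ℝ) :
    Real.sqrt ((a + b) ^ 2 + (c + d) ^ 2) ≤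
      Real.sqrt (a ^ 2 + c ^ 2) + Real.sqrt (b ^ 2 + d ^ 2) := by
  have h := norm_add_le (!₂[a, c] : EuclideanSpace ℝ (Fin 2)) !₂[b, d]
  simpa [EuclideanSpace.norm_eq, Fin.sum_univ_two] using h

/-- One player's best response: an integer minimizer for the linear term `C u + d` has norm at
most `s‖u‖ + ‖Q⁻¹d‖ + P`. -/
lemma euclNorm_best_response_le {m n : ℕ} {Q : Matrix (Fin n) (Fin n) ℝ}
    {C : Matrix (Fin n) (Fin m) ℝ} {d : Fin n → ℝ} {P s : ℝ} (hP : IsProxBound Q P)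
    (hR : ∀ u : Fin m → ℝ, euclNorm ((Q⁻¹ * C) *ᵥ u) ≤ s * euclNorm u)
    (u : Fin m → ℝ) (v : Fin n → ℤ)
    (hv : ∀ w : Fin n → ℤ,
      (1 / 2) * (ic v ⬝ᵥ Q *ᵥ ic v) + (C *ᵥ u + d) ⬝ᵥ ic v ≤
      (1 / 2) * (ic w ⬝ᵥ Q *ᵥ ic w) + (C *ᵥ u + d) ⬝ᵥ ic w) :
    euclNorm (ic v) ≤ s * euclNorm u + euclNorm (Q⁻¹ *ᵥ d) + P := by
  have h := hP.2 _ v hv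
  have hu := hR u
  rw [Matrix.mulVec_add, Matrix.mulVec_mulVec] at h
  simp only [euclNorm_eq_norm, WithLp.toLp_add] at h hu ⊢
  set p := WithLp.toLp 2 (ic v)
  set q := WithLp.toLp 2 ((Q⁻¹ * C) *ᵥ u)
  set r := WithLp.toLp 2 (Q⁻¹ *ᵥ d)
  have h1 : ‖p‖ ≤ ‖p + (q + r)‖ + ‖q + r‖ := by
    simpa using norm_sub_le (p + (q + r)) (q + r)
  have h2 := norm_add_le q r
  linarith

/-- One step of best response maps `(x,y)` to a point whose norm is at most
`s‖(x,y)‖ + ‖(Q1⁻¹d1, Q2⁻¹d2)‖ + √(P1² + P2²)`. -/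
theorem best_response_norm_bound {nx ny : ℕ}
    (Q1 : Matrix (Fin nx) (Fin nx) ℝ) (Q2 : Matrix (Fin ny) (Fin ny) ℝ)
    (hQ1 : Q1.PosDef) (hQ2 : Q2.PosDef)
    (C1 : Matrix (Fin nx) (Fin ny) ℝ) (C2 : Matrix (Fin ny) (Fin nx) ℝ)
    (d1 : Fin nx → ℝ) (d2 : Fin ny → ℝ)
    (P1 P2 : ℝ) (hP1 : IsProxBound Q1 P1) (hP2 : IsProxBound Q2 P2)
    (s : ℝ) (hs : 0 ≤ s)
    (hR1 : ∀ v : Fin ny → ℝ, euclNorm ((Q1⁻¹ * C1) *ᵥ v) ≤ s * euclNorm v)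
    (hR2 : ∀ w : Fin nx → ℝ, euclNorm ((Q2⁻¹ * C2) *ᵥ w) ≤ s * euclNorm w)
    (x : Fin nx → ℤ) (y : Fin ny → ℤ) (x' : Fin nx → ℤ) (y' : Fin ny → ℤ)
    (hx' : ∀ w : Fin nx → ℤ, f1 Q1 C1 d1 (ic x') (ic y) ≤ f1 Q1 C1 d1 (ic w) (ic y))
    (hy' : ∀ w : Fin ny → ℤ, f2 Q2 C2 d2 (ic x) (ic y') ≤ f2 Q2 C2 d2 (ic x) (ic w)) :
    pairNorm (ic x') (ic y') ≤
      s * pairNorm (ic x) (ic y) + pairNorm (Q1⁻¹ *ᵥ d1) (Q2⁻¹ *ᵥ d2) +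
        Real.sqrt (P1 ^ 2 + P2 ^ 2) := by
  -- The x-player's bound involves `‖y‖` and vice versa, hence the swapped sum of squares.
  have hscale : Real.sqrt ((s * euclNorm (ic y)) ^ 2 + (s * euclNorm (ic x)) ^ 2) =
      s * pairNorm (ic x) (ic y) := by
    rw [pairNorm, mul_pow, mul_pow, ← mul_add, Real.sqrt_mul (sq_nonneg s), Real.sqrt_sq hs,
      add_comm]
  have h1 := euclNorm_best_response_le hP1 hR1 (ic y) x' hx'
  have h2 := euclNorm_best_response_le hP2 hR2 (ic x) y' hy'
  have hmono : pairNorm (ic x') (ic y') ≤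
      Real.sqrt ((s * euclNorm (ic y) + euclNorm (Q1⁻¹ *ᵥ d1) + P1) ^ 2 +
        (s * euclNorm (ic x) + euclNorm (Q2⁻¹ *ᵥ d2) + P2) ^ 2) :=
    Real.sqrt_le_sqrt (add_le_add (pow_le_pow_left₀ (euclNorm_nonneg _) h1 2)
      (pow_le_pow_left₀ (euclNorm_nonneg _) h2 2))
  have h3 := sqrt_sq_add_sq_le (s * euclNorm (ic y) + euclNorm (Q1⁻¹ *ᵥ d1)) P1
    (s * euclNorm (ic x) + euclNorm (Q2⁻¹ *ᵥ d2)) P2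
  have h4 := sqrt_sq_add_sq_le (s * euclNorm (ic y)) (euclNorm (Q1⁻¹ *ᵥ d1))
    (s * euclNorm (ic x)) (euclNorm (Q2⁻¹ *ᵥ d2))
  rw [hscale] at h4
  change _ ≤ _ + pairNorm (Q1⁻¹ *ᵥ d1) (Q2⁻¹ *ᵥ d2) at h4
  linarith
end

section
/- Consider an ICQS instance with negatively adequate objectives with margin ρ > 0, and let P1, P2 be proximity bounds for Q1 and Q2 respectively. Let (x_i, y_i) be a best-response sequence whose initial point satisfies ‖(x_0, y_0)‖ > (sqrt(P1² + P2²) + ‖(Q1⁻¹d1, Q2⁻¹d2)‖)/ρ. Then ‖(x_{i+1}, y_{i+1})‖ > ‖(x_i, y_i)‖ for every i ≥ 0, and ‖(x_i, y_i)‖ → ∞ as i → ∞; in particular, the sequence never repeats a pair of strategies. -/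
/-!
Write `u i = (X i, Y i)`. By the definition of a proximity bound, the next iterate satisfies
`X (i+1) = e₁ - R₁ (Y i) - Q₁⁻¹ d₁` and `Y (i+1) = e₂ - R₂ (X i) - Q₂⁻¹ d₂` with `‖e₁‖ ≤ P₁` and
`‖e₂‖ ≤ P₂`. Since `R₁` and `R₂` expand norms by at least `1 + ρ`, the triangle inequality for the
norm of pairs gives `(1 + ρ) ‖u i‖ ≤ ‖u (i+1)‖ + K`, where `K = √(P₁² + P₂²) + ‖(Q₁⁻¹d₁, Q₂⁻¹d₂)‖`
(`pairNorm_step`). The initial condition says `K < ρ ‖u 0‖`, so every step increases the norm by at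
least the fixed amount `ρ ‖u 0‖ - K > 0` (`strictMono_tendsto_of_expand`).
-/

open Matrix

/-- The norm of a pair is the norm of the concatenated vector in a Euclidean space, which makes the
triangle inequality available. -/
lemma pairNorm_eq_norm {m n : ℕ} (x : Fin m → ℝ) (y : Fin n → ℝ) :
    pairNorm x y = ‖(WithLp.toLp 2 (Sum.elim x y) : EuclideanSpace ℝ (Fin m ⊕ Fin n))‖ := by
  rw [EuclideanSpace.norm_eq, pairNorm, euclNorm, euclNorm,
    Real.sq_sqrt (Finset.sum_nonneg fun i _ => sq_nonneg _),
    Real.sq_sqrt (Finset.sum_nonneg fun i _ => sq_nonneg _)]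
  simp [Fintype.sum_sum_type]

lemma pairNorm_sub_le {m n : ℕ} (a a' : Fin m → ℝ) (b b' : Fin n → ℝ) :
    pairNorm (a - a') (b - b') ≤ pairNorm a b + pairNorm a' b' := by
  have h : (WithLp.toLp 2 (Sum.elim (a - a') (b - b')) : EuclideanSpace ℝ (Fin m ⊕ Fin n)) =
      WithLp.toLp 2 (Sum.elim a b) - WithLp.toLp 2 (Sum.elim a' b') := by
    ext i
    cases i <;> simp
  rw [pairNorm_eq_norm, pairNorm_eq_norm, pairNorm_eq_norm, h]
  exact norm_sub_le _ _

/-- One step of the best-response dynamics: `(x', y')` is the response to `(x, y)`, and `a`, `b` are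
the constant terms `Q₁⁻¹ d₁`, `Q₂⁻¹ d₂`. -/
lemma pairNorm_step {m n : ℕ} {R1 : Matrix (Fin m) (Fin n) ℝ} {R2 : Matrix (Fin n) (Fin m) ℝ}
    {ρ : ℝ} (hρ : 0 < ρ)
    (hR1 : ∀ v : Fin n → ℝ, (1 + ρ) * euclNorm v ≤ euclNorm (R1 *ᵥ v))
    (hR2 : ∀ w : Fin m → ℝ, (1 + ρ) * euclNorm w ≤ euclNorm (R2 *ᵥ w))
    {P1 P2 : ℝ} {x x' a : Fin m → ℝ} {y y' b : Fin n → ℝ}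
    (h1 : euclNorm (x' + (R1 *ᵥ y + a)) ≤ P1) (h2 : euclNorm (y' + (R2 *ᵥ x + b)) ≤ P2) :
    (1 + ρ) * pairNorm x y ≤ pairNorm x' y' + (Real.sqrt (P1 ^ 2 + P2 ^ 2) + pairNorm a b) := by
  have hexp : (1 + ρ) * pairNorm x y ≤ pairNorm (R1 *ᵥ y) (R2 *ᵥ x) := by
    apply Real.le_sqrt_of_sq_le
    rw [mul_pow, pairNorm, Real.sq_sqrt (by positivity)]
    have hy := pow_le_pow_left₀ (mul_nonneg (by linarith) (euclNorm_nonneg y)) (hR1 y) 2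
    have hx := pow_le_pow_left₀ (mul_nonneg (by linarith) (euclNorm_nonneg x)) (hR2 x) 2
    rw [mul_pow] at hx hy
    linarith
  have herr : pairNorm (x' + (R1 *ᵥ y + a)) (y' + (R2 *ᵥ x + b)) ≤
      Real.sqrt (P1 ^ 2 + P2 ^ 2) :=
    Real.sqrt_le_sqrt (add_le_add (pow_le_pow_left₀ (euclNorm_nonneg _) h1 2)
      (pow_le_pow_left₀ (euclNorm_nonneg _) h2 2))
  have t1 := pairNorm_sub_le (x' + (R1 *ᵥ y + a) - x') a (y' + (R2 *ᵥ x + b) - y') b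
  have t2 := pairNorm_sub_le (x' + (R1 *ᵥ y + a)) x' (y' + (R2 *ᵥ x + b)) y'
  have e1 : x' + (R1 *ᵥ y + a) - x' - a = R1 *ᵥ y := by abel
  have e2 : y' + (R2 *ᵥ x + b) - y' - b = R2 *ᵥ x := by abel
  rw [e1, e2] at t1
  linarith

lemma strictMono_tendsto_of_expand {u : ℕ → ℝ} {ρ K : ℝ} (hρ : 0 < ρ)
    (hstep : ∀ i, (1 + ρ) * u i ≤ u (i + 1) + K) (h0 : K / ρ < u 0) :
    StrictMono u ∧ Filter.Tendsto u Filter.atTop Filter.atTop := by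
  have hδ : 0 < ρ * u 0 - K := by
    rw [div_lt_iff₀ hρ] at h0
    linarith
  have hlin : ∀ i : ℕ, u 0 + i * (ρ * u 0 - K) ≤ u i ∧ u 0 ≤ u i := by
    intro i
    induction i with
    | zero => simp
    | succ k ih =>
      have h := hstep k
      have hm := mul_le_mul_of_nonneg_left ih.2 hρ.le
      push_cast
      constructor <;> nlinarith [ih.1, ih.2]
  constructor
  · refine strictMono_nat_of_lt_succ fun i => ?_
    have h := hstep i
    have hm := mul_le_mul_of_nonneg_left (hlin i).2 hρ.le
    linarith
  · exact Filter.tendsto_atTop_mono (fun i => (hlin i).1)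
      (Filter.tendsto_atTop_add_const_left _ _
        (tendsto_natCast_atTop_atTop.atTop_mul_const hδ))

/-- With negatively adequate objectives (margin ρ), any best-response sequence
starting far enough from the origin has strictly increasing norms, diverges,
and never repeats a pair of strategies. -/
theorem best_response_diverges {nx ny : ℕ}
    (Q1 : Matrix (Fin nx) (Fin nx) ℝ) (Q2 : Matrix (Fin ny) (Fin ny) ℝ)
    (hQ1 : Q1.PosDef) (hQ2 : Q2.PosDef)
    (C1 : Matrix (Fin nx) (Fin ny) ℝ) (C2 : Matrix (Fin ny) (Fin nx) ℝ)
    (d1 : Fin nx → ℝ) (d2 : Fin ny → ℝ)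
    (ρ : ℝ) (hρ : 0 < ρ)
    (hR1 : ∀ v : Fin ny → ℝ, (1 + ρ) * euclNorm v ≤ euclNorm ((Q1⁻¹ * C1) *ᵥ v))
    (hR2 : ∀ w : Fin nx → ℝ, (1 + ρ) * euclNorm w ≤ euclNorm ((Q2⁻¹ * C2) *ᵥ w))
    (P1 P2 : ℝ) (hP1 : IsProxBound Q1 P1) (hP2 : IsProxBound Q2 P2)
    (X : ℕ → Fin nx → ℤ) (Y : ℕ → Fin ny → ℤ)
    (hBRx : ∀ i, ∀ w : Fin nx → ℤ,
      f1 Q1 C1 d1 (ic (X (i + 1))) (ic (Y i)) ≤ f1 Q1 C1 d1 (ic w) (ic (Y i)))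
    (hBRy : ∀ i, ∀ w : Fin ny → ℤ,
      f2 Q2 C2 d2 (ic (X i)) (ic (Y (i + 1))) ≤ f2 Q2 C2 d2 (ic (X i)) (ic w))
    (hinit : (Real.sqrt (P1 ^ 2 + P2 ^ 2) + pairNorm (Q1⁻¹ *ᵥ d1) (Q2⁻¹ *ᵥ d2)) / ρ <
      pairNorm (ic (X 0)) (ic (Y 0))) :
    (∀ i, pairNorm (ic (X i)) (ic (Y i)) < pairNorm (ic (X (i + 1))) (ic (Y (i + 1)))) ∧
    Filter.Tendsto (fun i => pairNorm (ic (X i)) (ic (Y i))) Filter.atTop Filter.atTop ∧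
    (∀ i j, i < j → ¬(X i = X j ∧ Y i = Y j)) := by
  have hstep : ∀ i, (1 + ρ) * pairNorm (ic (X i)) (ic (Y i)) ≤
      pairNorm (ic (X (i + 1))) (ic (Y (i + 1))) +
        (Real.sqrt (P1 ^ 2 + P2 ^ 2) + pairNorm (Q1⁻¹ *ᵥ d1) (Q2⁻¹ *ᵥ d2)) := by
    intro i
    have h1 := hP1.2 (C1 *ᵥ ic (Y i) + d1) (X (i + 1)) (hBRx i)
    have h2 := hP2.2 (C2 *ᵥ ic (X i) + d2) (Y (i + 1)) (hBRy i)
    rw [Matrix.mulVec_add, Matrix.mulVec_mulVec] at h1 h2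
    exact pairNorm_step hρ hR1 hR2 h1 h2
  obtain ⟨hmono, htends⟩ := strictMono_tendsto_of_expand
    (u := fun i => pairNorm (ic (X i)) (ic (Y i))) hρ hstep hinit
  refine ⟨fun i => hmono (Nat.lt_succ_self i), htends, ?_⟩
  rintro i j hij ⟨hX, hY⟩
  have h := hmono hij
  simp only [hX, hY, lt_irrefl] at h
end

section
/- Consider an ICQS instance, let P1, P2 be proximity bounds for Q1 and Q2, and let S_x, S_y form a best-response cycle. Let L_x = max{‖x − x'‖ : x, x' ∈ S_x} and L_y = max{‖y − y'‖ : y, y' ∈ S_y}, let λ1ˣ be the largest eigenvalue of Q1 and λ1ʸ the largest eigenvalue of Q2. Then every MNE of the game restricted to S_x × S_y is a (Δ_x, Δ_y)-MNE of the ICQS, where Δ_x = λ1ˣ·(P1 + L_x)² and Δ_y = λ1ʸ·(P2 + L_y)². -/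
/-!
Averaging a player's cost over the opponent's mixed strategy replaces the linear term by its mean
`c̄`, so the averaged cost is the quadratic `g(x) = ½ xᵀQx + c̄ᵀx`, whose real minimizer is
`u = -Q⁻¹c̄`. By completing the square, `g(x) - g(x') ≤ ½ (x - u)ᵀQ(x - u) ≤ ½ λ₁ ‖x - u‖²` for all
`x` and `x'` (`dotProduct_mulVec_le` bounds the quadratic form by the largest eigenvalue).

The point `u` is the mean of the minimizers `u_y = -Q⁻¹c_y` belonging to the opponent's pure
strategies `y`. Each `u_y` is within `P` of any integer best response to `y`; the cycle contains one,
and it is within `L` of any strategy `x` of the cycle. Convexity of the norm gives `‖x - u‖ ≤ P + L`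
(`euclNorm_mean_le`). Hence a strategy of the cycle, and with it the restricted equilibrium, loses
at most `½ λ₁ (P + L)²` against any deviation; `player_bound` records this without the factor `½`.
-/

open Matrix

/-- `l` is the largest eigenvalue of `Q`. -/
def IsMaxEigen {n : ℕ} (Q : Matrix (Fin n) (Fin n) ℝ) (l : ℝ) : Prop :=
  (∃ v : Fin n → ℝ, v ≠ 0 ∧ Q *ᵥ v = l • v) ∧
  (∀ (m : ℝ) (v : Fin n → ℝ), v ≠ 0 → Q *ᵥ v = m • v → m ≤ l)

/-- Finite nonempty sets `Sx`, `Sy` form a best-response cycle. -/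
def BRCycle {nx ny : ℕ} (Q1 : Matrix (Fin nx) (Fin nx) ℝ)
    (C1 : Matrix (Fin nx) (Fin ny) ℝ) (d1 : Fin nx → ℝ)
    (Q2 : Matrix (Fin ny) (Fin ny) ℝ)
    (C2 : Matrix (Fin ny) (Fin nx) ℝ) (d2 : Fin ny → ℝ)
    (Sx : Finset (Fin nx → ℤ)) (Sy : Finset (Fin ny → ℤ)) : Prop :=
  Sx.Nonempty ∧ Sy.Nonempty ∧
  (∀ y ∈ Sy, ∃ x ∈ Sx, ∀ w : Fin nx → ℤ,
    f1 Q1 C1 d1 (ic x) (ic y) ≤ f1 Q1 C1 d1 (ic w) (ic y)) ∧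
  (∀ x ∈ Sx, ∃ y ∈ Sy, ∀ w : Fin ny → ℤ,
    f2 Q2 C2 d2 (ic x) (ic y) ≤ f2 Q2 C2 d2 (ic x) (ic w)) ∧
  (∀ x ∈ Sx, ∃ y ∈ Sy, ∀ w : Fin nx → ℤ,
    f1 Q1 C1 d1 (ic x) (ic y) ≤ f1 Q1 C1 d1 (ic w) (ic y)) ∧
  (∀ y ∈ Sy, ∃ x ∈ Sx, ∀ w : Fin ny → ℤ,
    f2 Q2 C2 d2 (ic x) (ic y) ≤ f2 Q2 C2 d2 (ic x) (ic w))

lemma euclNorm_sq {n : ℕ} (x : Fin n → ℝ) : euclNorm x ^ 2 = x ⬝ᵥ x := by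
  rw [euclNorm, Real.sq_sqrt (Finset.sum_nonneg fun i _ => sq_nonneg _)]
  simp [dotProduct, sq]

lemma euclNorm_add_le {n : ℕ} (x y : Fin n → ℝ) : euclNorm (x + y) ≤ euclNorm x + euclNorm y := by
  simp only [euclNorm_eq_norm, WithLp.toLp_add]
  exact norm_add_le _ _

lemma euclNorm_mean_le {n : ℕ} {β : Type*} (T : Finset β) (q : β → ℝ) (z : β → Fin n → ℝ) (R : ℝ)
    (hq : ∀ y ∈ T, 0 ≤ q y) (hsum : ∑ y ∈ T, q y = 1) (hz : ∀ y ∈ T, euclNorm (z y) ≤ R) :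
    euclNorm (∑ y ∈ T, q y • z y) ≤ R := by
  rw [euclNorm_eq_norm, WithLp.toLp_sum]
  calc ‖∑ y ∈ T, WithLp.toLp 2 (q y • z y)‖ ≤ ∑ y ∈ T, q y * R := by
        refine norm_sum_le_of_le _ fun y hy => ?_
        rw [WithLp.toLp_smul, norm_smul, ← euclNorm_eq_norm, Real.norm_of_nonneg (hq y hy)]
        exact mul_le_mul_of_nonneg_left (hz y hy) (hq y hy)
    _ = R := by rw [← Finset.sum_mul, hsum, one_mul]

/-- The Rayleigh bound: `l • 1 - Q` is positive semidefinite, because an eigenvalue `m` of it gives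
the eigenvalue `l - m` of `Q`, which is at most `l`. -/
lemma dotProduct_mulVec_le {n : ℕ} {Q : Matrix (Fin n) (Fin n) ℝ} (hQ : Q.PosDef) {l : ℝ}
    (hl : IsMaxEigen Q l) (w : Fin n → ℝ) : w ⬝ᵥ Q *ᵥ w ≤ l * euclNorm w ^ 2 := by
  have hH : (l • (1 : Matrix (Fin n) (Fin n) ℝ) - Q).IsHermitian := by
    refine Matrix.IsHermitian.sub ?_ hQ.1
    simp [Matrix.IsHermitian]
  have hpsd : (l • (1 : Matrix (Fin n) (Fin n) ℝ) - Q).PosSemidef := by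
    rw [hH.posSemidef_iff_eigenvalues_nonneg]
    intro i
    have hv := hH.mulVec_eigenvectorBasis i
    have hne : (⇑(hH.eigenvectorBasis i) : Fin n → ℝ) ≠ 0 := by
      intro h
      apply hH.eigenvectorBasis.orthonormal.ne_zero i
      ext j
      exact congrFun h j
    have := hl.2 (l - hH.eigenvalues i) _ hne (by
      rw [Matrix.sub_mulVec, Matrix.smul_mulVec, Matrix.one_mulVec] at hv
      rw [sub_smul, ← hv]
      abel)
    simpa using this
  have h := hpsd.dotProduct_mulVec_nonneg w
  rw [Matrix.sub_mulVec, Matrix.smul_mulVec, Matrix.one_mulVec, dotProduct_sub,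
    dotProduct_smul] at h
  simp only [star_trivial, smul_eq_mul] at h
  rw [euclNorm_sq]
  linarith

lemma IsMaxEigen.nonneg {n : ℕ} {Q : Matrix (Fin n) (Fin n) ℝ} (hQ : Q.PosDef) {l : ℝ}
    (hl : IsMaxEigen Q l) : 0 ≤ l := by
  obtain ⟨v, hv, hev⟩ := hl.1
  have h1 := hQ.dotProduct_mulVec_pos hv
  rw [star_trivial, hev, dotProduct_smul, smul_eq_mul, ← euclNorm_sq] at h1
  by_contra! hneg
  nlinarith [sq_nonneg (euclNorm v)]

/-- Completing the square around `u = -Q⁻¹c`, the real minimizer of `½ xᵀQx + cᵀx`. -/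
lemma quadratic_sub_le {n : ℕ} {Q : Matrix (Fin n) (Fin n) ℝ} (hQ : Q.PosDef)
    (c x x' : Fin n → ℝ) :
    (1 / 2) * (x ⬝ᵥ Q *ᵥ x) + c ⬝ᵥ x ≤
      (1 / 2) * (x' ⬝ᵥ Q *ᵥ x') + c ⬝ᵥ x' +
        (1 / 2) * ((x + Q⁻¹ *ᵥ c) ⬝ᵥ Q *ᵥ (x + Q⁻¹ *ᵥ c)) := by
  set s := Q⁻¹ *ᵥ c with hs
  have hc : Q *ᵥ s = c := by
    rw [hs, Matrix.mulVec_mulVec, Matrix.mul_nonsing_inv _ hQ.det_pos.ne'.isUnit,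
      Matrix.one_mulVec]
  have hT : Qᵀ = Q := by simpa [Matrix.IsSymm] using hQ.1
  have hsymm : ∀ a : Fin n → ℝ, s ⬝ᵥ Q *ᵥ a = c ⬝ᵥ a := by
    intro a
    rw [Matrix.dotProduct_mulVec, ← Matrix.mulVec_transpose, hT, hc]
  have h := hQ.posSemidef.dotProduct_mulVec_nonneg (x' + s)
  simp only [star_trivial, Matrix.mulVec_add, dotProduct_add, add_dotProduct, hsymm, hc,
    dotProduct_comm _ c] at h ⊢
  linarith

/-- The cost of `x`, averaged over the linear terms `c y`, exceeds that of any `x'` by at most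
`l (P + L)²` as soon as each `c y` has an integer minimizer within `L` of `x`. -/
lemma player_bound {n : ℕ} {β : Type*} {Q : Matrix (Fin n) (Fin n) ℝ} (hQ : Q.PosDef) {P l L : ℝ}
    (hP : IsProxBound Q P) (hl : IsMaxEigen Q l) (T : Finset β) (q : β → ℝ) (c : β → Fin n → ℝ)
    (hq : ∀ y ∈ T, 0 ≤ q y) (hsum : ∑ y ∈ T, q y = 1) (x x' : Fin n → ℝ)
    (hbr : ∀ y ∈ T, ∃ v : Fin n → ℤ, (∀ w : Fin n → ℤ,
      (1 / 2) * (ic v ⬝ᵥ Q *ᵥ ic v) + c y ⬝ᵥ ic v ≤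
        (1 / 2) * (ic w ⬝ᵥ Q *ᵥ ic w) + c y ⬝ᵥ ic w) ∧ euclNorm (x - ic v) ≤ L) :
    ∑ y ∈ T, q y * ((1 / 2) * (x ⬝ᵥ Q *ᵥ x) + c y ⬝ᵥ x) ≤
      (∑ y ∈ T, q y * ((1 / 2) * (x' ⬝ᵥ Q *ᵥ x') + c y ⬝ᵥ x')) + l * (P + L) ^ 2 := by
  have havg : ∀ a : Fin n → ℝ, ∑ y ∈ T, q y * ((1 / 2) * (a ⬝ᵥ Q *ᵥ a) + c y ⬝ᵥ a) =
      (1 / 2) * (a ⬝ᵥ Q *ᵥ a) + (∑ y ∈ T, q y • c y) ⬝ᵥ a := by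
    intro a
    simp only [mul_add, Finset.sum_add_distrib, ← Finset.sum_mul, hsum, one_mul, sum_dotProduct,
      smul_dotProduct, smul_eq_mul]
  rw [havg, havg]
  have hmean : x + Q⁻¹ *ᵥ (∑ y ∈ T, q y • c y) = ∑ y ∈ T, q y • (x + Q⁻¹ *ᵥ c y) := by
    simp only [smul_add, Finset.sum_add_distrib, ← Finset.sum_smul, hsum, one_smul,
      Matrix.mulVec_sum, Matrix.mulVec_smul]
  have hdist : euclNorm (x + Q⁻¹ *ᵥ (∑ y ∈ T, q y • c y)) ≤ P + L := by
    rw [hmean]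
    refine euclNorm_mean_le T q _ _ hq hsum fun y hy => ?_
    obtain ⟨v, hv, hxv⟩ := hbr y hy
    have h1 := hP.2 (c y) v hv
    have h2 := euclNorm_add_le (x - ic v) (ic v + Q⁻¹ *ᵥ c y)
    rw [← add_assoc, sub_add_cancel] at h2
    linarith
  have h1 := quadratic_sub_le hQ (∑ y ∈ T, q y • c y) x x'
  have h2 := dotProduct_mulVec_le hQ hl (x + Q⁻¹ *ᵥ (∑ y ∈ T, q y • c y))
  have h3 := mul_le_mul_of_nonneg_left (pow_le_pow_left₀ (euclNorm_nonneg _) hdist 2)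
    (hl.nonneg hQ)
  have h4 := mul_nonneg (hl.nonneg hQ) (sq_nonneg (P + L))
  linarith

/-- Any MNE of the game restricted to the strategies of a best-response cycle is a
`(λ₁ˣ(P1+Lx)², λ₁ʸ(P2+Ly)²)`-MNE of the full integer game. -/
theorem restricted_MNE_is_approx_MNE {nx ny : ℕ}
    (Q1 : Matrix (Fin nx) (Fin nx) ℝ) (Q2 : Matrix (Fin ny) (Fin ny) ℝ)
    (hQ1 : Q1.PosDef) (hQ2 : Q2.PosDef)
    (C1 : Matrix (Fin nx) (Fin ny) ℝ) (C2 : Matrix (Fin ny) (Fin nx) ℝ)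
    (d1 : Fin nx → ℝ) (d2 : Fin ny → ℝ)
    (P1 P2 : ℝ) (hP1 : IsProxBound Q1 P1) (hP2 : IsProxBound Q2 P2)
    (Sx : Finset (Fin nx → ℤ)) (Sy : Finset (Fin ny → ℤ))
    (hcyc : BRCycle Q1 C1 d1 Q2 C2 d2 Sx Sy)
    (Lx Ly : ℝ)
    (hLx : IsGreatest {d : ℝ | ∃ x ∈ Sx, ∃ x' ∈ Sx, d = euclNorm (ic x - ic x')} Lx)
    (hLy : IsGreatest {d : ℝ | ∃ y ∈ Sy, ∃ y' ∈ Sy, d = euclNorm (ic y - ic y')} Ly)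
    (l1x l1y : ℝ) (hl1x : IsMaxEigen Q1 l1x) (hl1y : IsMaxEigen Q2 l1y)
    (p : (Fin nx → ℤ) → ℝ) (q : (Fin ny → ℤ) → ℝ)
    (hp : ∀ x ∈ Sx, 0 ≤ p x ∧ p x ≤ 1) (hq : ∀ y ∈ Sy, 0 ≤ q y ∧ q y ≤ 1)
    (hpsum : ∑ x ∈ Sx, p x = 1) (hqsum : ∑ y ∈ Sy, q y = 1)
    (hMNE1 : ∀ x' ∈ Sx,
      ∑ x ∈ Sx, ∑ y ∈ Sy, p x * q y * f1 Q1 C1 d1 (ic x) (ic y) ≤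
        ∑ y ∈ Sy, q y * f1 Q1 C1 d1 (ic x') (ic y))
    (hMNE2 : ∀ y' ∈ Sy,
      ∑ x ∈ Sx, ∑ y ∈ Sy, p x * q y * f2 Q2 C2 d2 (ic x) (ic y) ≤
        ∑ x ∈ Sx, p x * f2 Q2 C2 d2 (ic x) (ic y')) :
    (∀ x' : Fin nx → ℤ,
      ∑ x ∈ Sx, ∑ y ∈ Sy, p x * q y * f1 Q1 C1 d1 (ic x) (ic y) ≤
        (∑ y ∈ Sy, q y * f1 Q1 C1 d1 (ic x') (ic y)) + l1x * (P1 + Lx) ^ 2) ∧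
    (∀ y' : Fin ny → ℤ,
      ∑ x ∈ Sx, ∑ y ∈ Sy, p x * q y * f2 Q2 C2 d2 (ic x) (ic y) ≤
        (∑ x ∈ Sx, p x * f2 Q2 C2 d2 (ic x) (ic y')) + l1y * (P2 + Ly) ^ 2) := by
  obtain ⟨⟨x₀, hx₀⟩, ⟨y₀, hy₀⟩, hbx, hby, -, -⟩ := hcyc
  refine ⟨fun x' => (hMNE1 x₀ hx₀).trans ?_, fun y' => (hMNE2 y₀ hy₀).trans ?_⟩
  · refine player_bound hQ1 hP1 hl1x Sy q (fun y => C1 *ᵥ ic y + d1) (fun y hy => (hq y hy).1)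
      hqsum (ic x₀) (ic x') fun y hy => ?_
    obtain ⟨v, hv, hmin⟩ := hbx y hy
    exact ⟨v, hmin, hLx.2 ⟨x₀, hx₀, v, hv, rfl⟩⟩
  · refine player_bound hQ2 hP2 hl1y Sx p (fun x => C2 *ᵥ ic x + d2) (fun x hx => (hp x hx).1)
      hpsum (ic y₀) (ic y') fun x hx => ?_
    obtain ⟨v, hv, hmin⟩ := hby x hx
    exact ⟨v, hmin, hLy.2 ⟨y₀, hy₀, v, hv, rfl⟩⟩
end

section
/- Consider an ICQS instance, let P1, P2 be proximity bounds for Q1 and Q2, and suppose there are s1, s2 ≥ 0 with s1·s2 < 1 such that ‖R1v‖ ≤ s1‖v‖ for all v ∈ ℝ^{n_y} and ‖R2w‖ ≤ s2‖w‖ for all w ∈ ℝ^{n_x}. Let S_x, S_y form a best-response cycle. Then max{‖x − x'‖ : x, x' ∈ S_x} ≤ (2·P2·s1 + 2·P1)/(1 − s1·s2) and max{‖y − y'‖ : y, y' ∈ S_y} ≤ (2·P1·s2 + 2·P2)/(1 − s1·s2). -/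
/-!
The integer best response `x` to `y` lies within `P1` of the continuous best response
`-Q1⁻¹(C1 y + d1)`, and the continuous best response is an `s1`-Lipschitz function of `y`. Hence two
points of `Sx` that respond to `y, y' ∈ Sy` satisfy `‖x - x'‖ ≤ 2 P1 + s1 ‖y - y'‖`
(`response_dist_le`), and symmetrically with the players exchanged. Every point of the cycle is a
best response to some point of the other side, so the diameters `Dx`, `Dy` satisfy
`Dx ≤ 2 P1 + s1 Dy` and `Dy ≤ 2 P2 + s2 Dx`. As both are finite and `s1 s2 < 1`, substituting one
inequality into the other and solving gives the bounds (`diam_le_of_coupled`).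
-/

open Matrix

lemma euclNorm_sub_le {n : ℕ} (x y : Fin n → ℝ) :
    euclNorm (x - y) ≤ euclNorm x + euclNorm y := by
  simpa [euclNorm_eq_norm] using norm_sub_le (WithLp.toLp 2 x) (WithLp.toLp 2 y)

/-- Integer best responses `v`, `v'` to `z`, `z'` are at distance at most `2P + s‖z - z'‖`, where
`s` bounds the operator norm of the interaction matrix. This covers both players, whose costs have
the same shape. -/
lemma response_dist_le {m n : ℕ} {Q : Matrix (Fin n) (Fin n) ℝ} {C : Matrix (Fin n) (Fin m) ℝ}
    {d : Fin n → ℝ} {P s : ℝ} (hP : IsProxBound Q P)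
    (hR : ∀ v : Fin m → ℝ, euclNorm ((Q⁻¹ * C) *ᵥ v) ≤ s * euclNorm v)
    {v v' : Fin n → ℤ} {z z' : Fin m → ℝ}
    (hv : ∀ w : Fin n → ℤ, f1 Q C d (ic v) z ≤ f1 Q C d (ic w) z)
    (hv' : ∀ w : Fin n → ℤ, f1 Q C d (ic v') z' ≤ f1 Q C d (ic w) z') :
    euclNorm (ic v - ic v') ≤ 2 * P + s * euclNorm (z - z') := by
  have h := hP.2 (C *ᵥ z + d) v hv
  have h' := hP.2 (C *ᵥ z' + d) v' hv'
  have hsplit : ic v - ic v' =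
      ((ic v + Q⁻¹ *ᵥ (C *ᵥ z + d)) - (ic v' + Q⁻¹ *ᵥ (C *ᵥ z' + d)))
        - (Q⁻¹ * C) *ᵥ (z - z') := by
    simp only [mulVec_add, mulVec_sub, mulVec_mulVec]
    abel
  rw [hsplit]
  have h1 := euclNorm_sub_le
    ((ic v + Q⁻¹ *ᵥ (C *ᵥ z + d)) - (ic v' + Q⁻¹ *ᵥ (C *ᵥ z' + d))) ((Q⁻¹ * C) *ᵥ (z - z'))
  have h2 := euclNorm_sub_le (ic v + Q⁻¹ *ᵥ (C *ᵥ z + d)) (ic v' + Q⁻¹ *ᵥ (C *ᵥ z' + d))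
  linarith [hR (z - z')]

/-- If distances in the finite set `S` are controlled by distances in `T` and conversely, with
Lipschitz constants of product less than `1`, then the diameter of `S` is bounded. -/
lemma diam_le_of_coupled {α β : Type*} {S : Finset α} {T : Finset β}
    {f : α → α → ℝ} {g : β → β → ℝ} {a b s t : ℝ}
    (hs : 0 ≤ s) (ht : 0 ≤ t) (hst : s * t < 1)
    (hf : ∀ x ∈ S, ∀ x' ∈ S, ∃ y ∈ T, ∃ y' ∈ T, f x x' ≤ 2 * a + s * g y y')
    (hg : ∀ y ∈ T, ∀ y' ∈ T, ∃ x ∈ S, ∃ x' ∈ S, g y y' ≤ 2 * b + t * f x x') :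
    ∀ x ∈ S, ∀ x' ∈ S, f x x' ≤ (2 * b * s + 2 * a) / (1 - s * t) := by
  -- `p`, `p'` is a pair realising the diameter of `S`
  intro x hx x' hx'
  obtain ⟨⟨p, p'⟩, hp, hmax⟩ := (S ×ˢ S).exists_max_image (fun q => f q.1 q.2)
    ⟨(x, x'), Finset.mk_mem_product hx hx'⟩
  rw [Finset.mem_product] at hp
  refine (hmax (x, x') (Finset.mk_mem_product hx hx')).trans ?_
  obtain ⟨y, hy, y', hy', h1⟩ := hf p hp.1 p' hp.2
  obtain ⟨u, hu, u', hu', h2⟩ := hg y hy y' hy'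
  have h3 : f u u' ≤ f p p' := hmax (u, u') (Finset.mk_mem_product hu hu')
  have h4 : s * g y y' ≤ s * (2 * b + t * f p p') :=
    mul_le_mul_of_nonneg_left (h2.trans (by gcongr)) hs
  rw [le_div_iff₀ (by linarith)]
  linarith

/-- Under positively adequate objectives (`s1·s2 < 1`), the diameters of the
sets of a best-response cycle are bounded. -/
theorem cycle_diameter_bound {nx ny : ℕ}
    (Q1 : Matrix (Fin nx) (Fin nx) ℝ) (Q2 : Matrix (Fin ny) (Fin ny) ℝ)
    (hQ1 : Q1.PosDef) (hQ2 : Q2.PosDef)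
    (C1 : Matrix (Fin nx) (Fin ny) ℝ) (C2 : Matrix (Fin ny) (Fin nx) ℝ)
    (d1 : Fin nx → ℝ) (d2 : Fin ny → ℝ)
    (P1 P2 : ℝ) (hP1 : IsProxBound Q1 P1) (hP2 : IsProxBound Q2 P2)
    (s1 s2 : ℝ) (hs1 : 0 ≤ s1) (hs2 : 0 ≤ s2) (hs : s1 * s2 < 1)
    (hR1 : ∀ v : Fin ny → ℝ, euclNorm ((Q1⁻¹ * C1) *ᵥ v) ≤ s1 * euclNorm v)
    (hR2 : ∀ w : Fin nx → ℝ, euclNorm ((Q2⁻¹ * C2) *ᵥ w) ≤ s2 * euclNorm w)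
    (Sx : Finset (Fin nx → ℤ)) (Sy : Finset (Fin ny → ℤ))
    (hcyc : BRCycle Q1 C1 d1 Q2 C2 d2 Sx Sy) :
    (∀ x ∈ Sx, ∀ x' ∈ Sx,
      euclNorm (ic x - ic x') ≤ (2 * P2 * s1 + 2 * P1) / (1 - s1 * s2)) ∧
    (∀ y ∈ Sy, ∀ y' ∈ Sy,
      euclNorm (ic y - ic y') ≤ (2 * P1 * s2 + 2 * P2) / (1 - s1 * s2)) := by
  obtain ⟨-, -, -, -, hx, hy⟩ := hcyc
  have hf : ∀ x ∈ Sx, ∀ x' ∈ Sx, ∃ y ∈ Sy, ∃ y' ∈ Sy,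
      euclNorm (ic x - ic x') ≤ 2 * P1 + s1 * euclNorm (ic y - ic y') := by
    intro x h x' h'
    obtain ⟨y, hyS, hmin⟩ := hx x h
    obtain ⟨y', hyS', hmin'⟩ := hx x' h'
    exact ⟨y, hyS, y', hyS', response_dist_le hP1 hR1 hmin hmin'⟩
  have hg : ∀ y ∈ Sy, ∀ y' ∈ Sy, ∃ x ∈ Sx, ∃ x' ∈ Sx,
      euclNorm (ic y - ic y') ≤ 2 * P2 + s2 * euclNorm (ic x - ic x') := by
    -- `f2` is `f1` with the two players exchanged, definitionally, so `response_dist_le` applies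
    intro y h y' h'
    obtain ⟨x, hxS, hmin⟩ := hy y h
    obtain ⟨x', hxS', hmin'⟩ := hy y' h'
    exact ⟨x, hxS, x', hxS', response_dist_le hP2 hR2 (d := d2) hmin hmin'⟩
  refine ⟨diam_le_of_coupled hs1 hs2 hs hf hg, ?_⟩
  rw [mul_comm s1 s2] at hs ⊢
  exact diam_le_of_coupled hs2 hs1 hs hg hf
end

section
/- For every Δ > 0 there exists an ICQS instance with n_x = n_y = 2, Q1 = Q2 = I (the 2×2 identity matrix), finite nonempty sets S_x, S_y ⊆ ℤ² forming a best-response cycle, and a mixed profile (p,q) on S_x, S_y such that (p,q) is an MNE of the game restricted to S_x × S_y but (p,q) is not a (Δ,Δ)-MNE of the ICQS; in fact, the x-player has a deviation x' ∈ ℤ² whose expected cost against q is smaller than the x-player's expected cost under (p,q) by more than Δ. -/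
/-!
The `x`-player with `Q1 = I` wants to be as close as possible to the target `-(C1 y + d1)`, and
likewise for the `y`-player. Take `C1 = I`, `C2 = -I`, `d1 = d2 = 0`: the best response to `y` is
`x = -y`, the best response to `x` is `y = x`. Hence best-response dynamics started at `(k, 0)` cycle
on `Sx = Sy = {(k, 0), (-k, 0)}`. The uniform profile makes both players indifferent on these
sets, with expected cost `k² / 2`, while the `x`-player could play the origin at cost `0`.
A natural number `k > 2Δ` then gives a gain `k² / 2 > Δ`.
-/

open Matrix

/-- Coordinate form of the `x`-player's cost for `C1 = I`, `d1 = 0`. -/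
lemma f1_one_eq (x y : Fin 2 → ℤ) :
    f1 (1 : Matrix (Fin 2) (Fin 2) ℝ) (1 : Matrix (Fin 2) (Fin 2) ℝ) 0 (ic x) (ic y) =
      (1 / 2) * ((x 0 : ℝ) ^ 2 + (x 1 : ℝ) ^ 2) + ((y 0 : ℝ) * x 0 + (y 1 : ℝ) * x 1) := by
  simp [f1, ic, dotProduct, Fin.sum_univ_two]
  ring

/-- Coordinate form of the `y`-player's cost for `C2 = -I`, `d2 = 0`. -/
lemma f2_neg_one_eq (x y : Fin 2 → ℤ) :
    f2 (1 : Matrix (Fin 2) (Fin 2) ℝ) (-1 : Matrix (Fin 2) (Fin 2) ℝ) 0 (ic x) (ic y) =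
      (1 / 2) * ((y 0 : ℝ) ^ 2 + (y 1 : ℝ) ^ 2) - ((x 0 : ℝ) * y 0 + (x 1 : ℝ) * y 1) := by
  simp [f2, ic, dotProduct, Fin.sum_univ_two, Matrix.neg_mulVec]
  ring

/-- For `C1 = I`, `d1 = 0`, the point `-y` is a best response of the `x`-player to `y`. -/
lemma f1_best_response (y w : Fin 2 → ℤ) :
    f1 (1 : Matrix (Fin 2) (Fin 2) ℝ) (1 : Matrix (Fin 2) (Fin 2) ℝ) 0 (ic (-y)) (ic y) ≤
      f1 (1 : Matrix (Fin 2) (Fin 2) ℝ) (1 : Matrix (Fin 2) (Fin 2) ℝ) 0 (ic w) (ic y) := by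
  simp only [f1_one_eq, Pi.neg_apply, Int.cast_neg]
  nlinarith [sq_nonneg ((w 0 : ℝ) + y 0), sq_nonneg ((w 1 : ℝ) + y 1)]

/-- For `C2 = -I`, `d2 = 0`, the point `x` is a best response of the `y`-player to `x`. -/
lemma f2_best_response (x w : Fin 2 → ℤ) :
    f2 (1 : Matrix (Fin 2) (Fin 2) ℝ) (-1 : Matrix (Fin 2) (Fin 2) ℝ) 0 (ic x) (ic x) ≤
      f2 (1 : Matrix (Fin 2) (Fin 2) ℝ) (-1 : Matrix (Fin 2) (Fin 2) ℝ) 0 (ic x) (ic w) := by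
  simp only [f2_neg_one_eq]
  nlinarith [sq_nonneg ((w 0 : ℝ) - x 0), sq_nonneg ((w 1 : ℝ) - x 1)]

/-- For every `Δ > 0` there is an ICQS instance with `Q1 = Q2 = I` (2×2), a
best-response cycle `Sx, Sy`, and an MNE of the restricted game that is not a
`(Δ,Δ)`-MNE: the x-player has a deviation improving by more than `Δ`. -/
theorem cycle_MNE_arbitrarily_bad (Δ : ℝ) (hΔ : 0 < Δ) :
    ∃ (C1 C2 : Matrix (Fin 2) (Fin 2) ℝ) (d1 d2 : Fin 2 → ℝ)
      (Sx Sy : Finset (Fin 2 → ℤ)) (p q : (Fin 2 → ℤ) → ℝ),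
      BRCycle (1 : Matrix (Fin 2) (Fin 2) ℝ) C1 d1
        (1 : Matrix (Fin 2) (Fin 2) ℝ) C2 d2 Sx Sy ∧
      (∀ x ∈ Sx, 0 ≤ p x ∧ p x ≤ 1) ∧ (∀ y ∈ Sy, 0 ≤ q y ∧ q y ≤ 1) ∧
      (∑ x ∈ Sx, p x = 1) ∧ (∑ y ∈ Sy, q y = 1) ∧
      (∀ x' ∈ Sx,
        ∑ x ∈ Sx, ∑ y ∈ Sy, p x * q y * f1 1 C1 d1 (ic x) (ic y) ≤
          ∑ y ∈ Sy, q y * f1 1 C1 d1 (ic x') (ic y)) ∧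
      (∀ y' ∈ Sy,
        ∑ x ∈ Sx, ∑ y ∈ Sy, p x * q y * f2 1 C2 d2 (ic x) (ic y) ≤
          ∑ x ∈ Sx, p x * f2 1 C2 d2 (ic x) (ic y')) ∧
      ∃ x' : Fin 2 → ℤ,
        (∑ y ∈ Sy, q y * f1 1 C1 d1 (ic x') (ic y)) + Δ <
          ∑ x ∈ Sx, ∑ y ∈ Sy, p x * q y * f1 1 C1 d1 (ic x) (ic y) := by
  obtain ⟨k, hk⟩ := exists_nat_gt (2 * Δ)
  have hk0 : (0 : ℝ) < k := by linarith
  have hk1 : (1 : ℝ) ≤ k := by exact_mod_cast (Nat.cast_pos.mp hk0 : 0 < k)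
  have hne : (![(k : ℤ), 0] : Fin 2 → ℤ) ≠ -![(k : ℤ), 0] := by
    intro h
    have h0 := congrFun h 0
    simp only [Matrix.cons_val_zero, Pi.neg_apply] at h0
    have : 0 < k := Nat.cast_pos.mp hk0
    omega
  refine ⟨1, -1, 0, 0, {![(k : ℤ), 0], -![(k : ℤ), 0]}, {![(k : ℤ), 0], -![(k : ℤ), 0]},
    fun _ => 1 / 2, fun _ => 1 / 2, ?_, ?_, ?_, ?_, ?_, ?_, ?_, 0, ?_⟩
  · -- The support is symmetric, so `-y` and `x` are the required responses in all four clauses.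
    have hneg : ∀ v ∈ ({![(k : ℤ), 0], -![(k : ℤ), 0]} : Finset (Fin 2 → ℤ)),
        -v ∈ ({![(k : ℤ), 0], -![(k : ℤ), 0]} : Finset (Fin 2 → ℤ)) := by
      intro v hv
      rw [Finset.mem_insert, Finset.mem_singleton] at hv ⊢
      rcases hv with rfl | rfl
      · exact Or.inr rfl
      · exact Or.inl (neg_neg _)
    refine ⟨⟨_, Finset.mem_insert_self _ _⟩, ⟨_, Finset.mem_insert_self _ _⟩, ?_, ?_, ?_, ?_⟩
    · exact fun y hy => ⟨-y, hneg y hy, f1_best_response y⟩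
    · exact fun x hx => ⟨x, hx, f2_best_response x⟩
    · intro x hx
      refine ⟨-x, hneg x hx, fun w => ?_⟩
      simpa only [neg_neg] using f1_best_response (-x) w
    · exact fun y hy => ⟨y, hy, f2_best_response y⟩
  · intro x _
    norm_num
  · intro y _
    norm_num
  · rw [Finset.sum_pair hne]
    norm_num
  · rw [Finset.sum_pair hne]
    norm_num
  · intro x' hx'
    rw [Finset.mem_insert, Finset.mem_singleton] at hx'
    simp only [Finset.sum_pair hne, f1_one_eq]
    rcases hx' with rfl | rfl <;> simp <;> linarith
  · intro y' hy'
    rw [Finset.mem_insert, Finset.mem_singleton] at hy'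
    simp only [Finset.sum_pair hne, f2_neg_one_eq]
    rcases hy' with rfl | rfl <;> simp <;> linarith
  · simp only [Finset.sum_pair hne, f1_one_eq]
    simp
    nlinarith
end

section
/- Consider an ICQS instance with negatively adequate objectives with margin ρ > 0, and define the continuous best-response map F : ℝ^{n_x} × ℝ^{n_y} → ℝ^{n_x} × ℝ^{n_y} by F(x,y) = (−Q1⁻¹(C1y + d1), −Q2⁻¹(C2x + d2)). Then for every initial point (x_0, y_0) with ‖(x_0, y_0)‖ > ‖(Q1⁻¹d1, Q2⁻¹d2)‖/ρ, the iterates (x_i, y_i) = Fⁱ(x_0, y_0) satisfy ‖(x_{i+1}, y_{i+1})‖ > ‖(x_i, y_i)‖ for all i ≥ 0 and ‖(x_i, y_i)‖ → ∞ as i → ∞. -/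
/-!
The best-response map is affine: `F (x, y) = -(R1 y, R2 x) - (Q1⁻¹ d1, Q2⁻¹ d2)`. Adequacy gives
`‖(R1 y, R2 x)‖ ≥ (1 + ρ) ‖(x, y)‖`, so by the triangle inequality
`‖F z‖ ≥ (1 + ρ) ‖z‖ - D` with `D = ‖(Q1⁻¹ d1, Q2⁻¹ d2)‖`. As long as `‖z‖ ≥ ‖z0‖`, one step thus
increases the norm by at least `ρ ‖z0‖ - D > 0`; this propagates by induction and gives linear
growth (at least) of the norms of the iterates.
-/

open Matrix

lemma pairNorm_le_neg_add {m n : ℕ} (x a : Fin m → ℝ) (y b : Fin n → ℝ) :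
    pairNorm x y ≤ pairNorm (-(x + a)) (-(y + b)) + pairNorm a b := by
  simp only [pairNorm_eq_norm]
  rw [← norm_neg (WithLp.toLp 2 (Sum.elim x y))]
  refine le_trans (le_of_eq ?_) (norm_add_le _ _)
  congr 1
  ext i
  rcases i with i | i <;> simp

/-- Blockwise expansion by the factor `c` gives expansion by `c` of the swapped pair. -/
lemma mul_pairNorm_le {m n : ℕ} {c : ℝ} (hc : 0 ≤ c) {x u : Fin m → ℝ} {y v : Fin n → ℝ}
    (hu : c * euclNorm y ≤ euclNorm u) (hv : c * euclNorm x ≤ euclNorm v) :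
    c * pairNorm x y ≤ pairNorm u v := by
  have h1 := pow_le_pow_left₀ (mul_nonneg hc (euclNorm_nonneg y)) hu 2
  have h2 := pow_le_pow_left₀ (mul_nonneg hc (euclNorm_nonneg x)) hv 2
  unfold pairNorm
  apply Real.le_sqrt_of_sq_le
  rw [mul_pow, Real.sq_sqrt (by positivity)]
  linarith [mul_pow c (euclNorm x) 2, mul_pow c (euclNorm y) 2]

/-- With negatively adequate objectives (margin ρ), the continuous best-response
iterates diverge from any initial point of norm exceeding `‖(Q1⁻¹d1,Q2⁻¹d2)‖/ρ`. -/
theorem continuous_BR_diverges {nx ny : ℕ}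
    (Q1 : Matrix (Fin nx) (Fin nx) ℝ) (Q2 : Matrix (Fin ny) (Fin ny) ℝ)
    (hQ1 : Q1.PosDef) (hQ2 : Q2.PosDef)
    (C1 : Matrix (Fin nx) (Fin ny) ℝ) (C2 : Matrix (Fin ny) (Fin nx) ℝ)
    (d1 : Fin nx → ℝ) (d2 : Fin ny → ℝ)
    (ρ : ℝ) (hρ : 0 < ρ)
    (hR1 : ∀ v : Fin ny → ℝ, (1 + ρ) * euclNorm v ≤ euclNorm ((Q1⁻¹ * C1) *ᵥ v))
    (hR2 : ∀ w : Fin nx → ℝ, (1 + ρ) * euclNorm w ≤ euclNorm ((Q2⁻¹ * C2) *ᵥ w))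
    (F : (Fin nx → ℝ) × (Fin ny → ℝ) → (Fin nx → ℝ) × (Fin ny → ℝ))
    (hF : ∀ z, F z = (-(Q1⁻¹ *ᵥ (C1 *ᵥ z.2 + d1)), -(Q2⁻¹ *ᵥ (C2 *ᵥ z.1 + d2))))
    (z0 : (Fin nx → ℝ) × (Fin ny → ℝ))
    (hinit : pairNorm (Q1⁻¹ *ᵥ d1) (Q2⁻¹ *ᵥ d2) / ρ < pairNorm z0.1 z0.2) :
    (∀ i : ℕ, pairNorm (F^[i] z0).1 (F^[i] z0).2 <
      pairNorm (F^[i + 1] z0).1 (F^[i + 1] z0).2) ∧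
    Filter.Tendsto (fun i => pairNorm (F^[i] z0).1 (F^[i] z0).2)
      Filter.atTop Filter.atTop := by
  set D := pairNorm (Q1⁻¹ *ᵥ d1) (Q2⁻¹ *ᵥ d2) with hD
  have step : ∀ z, (1 + ρ) * pairNorm z.1 z.2 ≤ pairNorm (F z).1 (F z).2 + D := by
    intro z
    refine (mul_pairNorm_le (by positivity) (hR1 z.2) (hR2 z.1)).trans ?_
    rw [hF]
    simp only [mulVec_add, mulVec_mulVec]
    exact pairNorm_le_neg_add _ _ _ _
  rw [div_lt_iff₀ hρ] at hinit
  set δ := pairNorm z0.1 z0.2 * ρ - D with hδ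
  have hδ0 : 0 < δ := sub_pos.mpr hinit
  have grow : ∀ i : ℕ, pairNorm z0.1 z0.2 ≤ pairNorm (F^[i] z0).1 (F^[i] z0).2 →
      pairNorm (F^[i] z0).1 (F^[i] z0).2 + δ ≤
        pairNorm (F^[i + 1] z0).1 (F^[i + 1] z0).2 := by
    intro i hi
    rw [Function.iterate_succ_apply']
    have h1 := step (F^[i] z0)
    have h2 := mul_le_mul_of_nonneg_right hi hρ.le
    linarith
  have lin : ∀ i : ℕ, pairNorm z0.1 z0.2 + i * δ ≤ pairNorm (F^[i] z0).1 (F^[i] z0).2 := by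
    intro i
    induction i with
    | zero => simp
    | succ i ih =>
      have h0 : 0 ≤ (i : ℝ) * δ := by positivity
      have := grow i (by linarith)
      push_cast
      linarith
  constructor
  · intro i
    have h0 : 0 ≤ (i : ℝ) * δ := by positivity
    linarith [grow i (by linarith [lin i])]
  · refine Filter.tendsto_atTop_mono lin (Filter.tendsto_atTop_add_const_left _ _ ?_)
    exact tendsto_natCast_atTop_atTop.atTop_mul_const hδ0
end

section
/- Consider an ICQS instance with positively adequate objectives with margin ρ ∈ (0,1], and let P1, P2 be proximity bounds for Q1 and Q2. Let F : ℤ^{n_x} × ℤ^{n_y} → ℤ^{n_x} × ℤ^{n_y} be any map such that for all (x,y), F(x,y) = (x',y') where x' minimizes f1(·,y) over ℤ^{n_x} and y' minimizes f2(x,·) over ℤ^{n_y}. Let S ⊆ ℤ^{n_x} × ℤ^{n_y} be a finite nonempty set with F(S) ⊆ S, and let ε satisfy 0 < ε < ρ. Then for every (x̂, ŷ) ∈ ℤ^{n_x} × ℤ^{n_y} with dist((x̂,ŷ), S) ≥ 2·sqrt(P1² + P2²)/ε, one has dist(F(x̂,ŷ), S) ≤ (1 − ρ + ε)·dist((x̂,ŷ),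 S), where dist(z, S) denotes the minimum Euclidean distance from z to a point of S. -/
/-!
Let `s ∈ S` be a point of `S` closest to `zh`. Since `F s ∈ S`, it suffices to bound the distance
from `F zh` to `F s`. By the proximity bounds, each component of `F` is the continuous best
response, an affine map with linear part `-R1` (resp. `-R2`), up to an error of norm at most `P1`
(resp. `P2`). Hence the two components of `F zh - F s` are bounded by `(1 - ρ)` times the
opposite component of `zh - s` plus `2 * P1` (resp. `2 * P2`) (`best_response_dist_le`).
Minkowski's inequality in the plane (`sqrt_swap_le`) gives the bound
`(1 - ρ) * D + 2 * √(P1 ^ 2 + P2 ^ 2)`, and the last term is at most `ε * D` because `zh` is far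
from `S`.
-/

open Matrix

lemma euclNorm_sub_sub_le {n : ℕ} (u v w : Fin n → ℝ) :
    euclNorm (u - v - w) ≤ euclNorm u + euclNorm v + euclNorm w := by
  simp only [euclNorm_eq_norm, WithLp.toLp_sub]
  exact (norm_sub_le _ _).trans (by gcongr; exact norm_sub_le _ _)

/-- One player's best responses `v`, `v'` to the opponent's moves `y`, `y'` differ by at most
the displacement of the continuous best responses plus one proximity error for each. -/
lemma best_response_dist_le {m n : ℕ} {Q : Matrix (Fin m) (Fin m) ℝ}
    {C : Matrix (Fin m) (Fin n) ℝ} {d : Fin m → ℝ} {P a : ℝ} (hP : IsProxBound Q P)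
    (hR : ∀ v : Fin n → ℝ, euclNorm ((Q⁻¹ * C) *ᵥ v) ≤ a * euclNorm v)
    {v v' : Fin m → ℤ} {y y' : Fin n → ℝ}
    (hv : ∀ w : Fin m → ℤ, (1 / 2) * (ic v ⬝ᵥ Q *ᵥ ic v) + (C *ᵥ y + d) ⬝ᵥ ic v ≤
      (1 / 2) * (ic w ⬝ᵥ Q *ᵥ ic w) + (C *ᵥ y + d) ⬝ᵥ ic w)
    (hv' : ∀ w : Fin m → ℤ, (1 / 2) * (ic v' ⬝ᵥ Q *ᵥ ic v') + (C *ᵥ y' + d) ⬝ᵥ ic v' ≤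
      (1 / 2) * (ic w ⬝ᵥ Q *ᵥ ic w) + (C *ᵥ y' + d) ⬝ᵥ ic w) :
    euclNorm (ic v - ic v') ≤ a * euclNorm (y - y') + 2 * P := by
  have h := hP.2 _ v hv
  have h' := hP.2 _ v' hv'
  have key : ic v - ic v' = (ic v + Q⁻¹ *ᵥ (C *ᵥ y + d)) - (ic v' + Q⁻¹ *ᵥ (C *ᵥ y' + d))
      - (Q⁻¹ * C) *ᵥ (y - y') := by
    simp only [mulVec_add, mulVec_sub, ← mulVec_mulVec]
    abel
  rw [key]
  linarith [euclNorm_sub_sub_le (ic v + Q⁻¹ *ᵥ (C *ᵥ y + d))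
    (ic v' + Q⁻¹ *ᵥ (C *ᵥ y' + d)) ((Q⁻¹ * C) *ᵥ (y - y')), hR (y - y')]

/-- Minkowski's inequality in the plane for the vectors `a • (q, p)` and `2 • (s, t)`; the swap
of `p` and `q` reflects that each player reacts to the move of the other. -/
lemma sqrt_swap_le {a p q s t u v : ℝ} (ha : 0 ≤ a) (hu0 : 0 ≤ u) (hv0 : 0 ≤ v)
    (hu : u ≤ a * q + 2 * s) (hv : v ≤ a * p + 2 * t) :
    √(u ^ 2 + v ^ 2) ≤ a * √(p ^ 2 + q ^ 2) + 2 * √(s ^ 2 + t ^ 2) := by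
  have hD := Real.sq_sqrt (by positivity : 0 ≤ p ^ 2 + q ^ 2)
  have hT := Real.sq_sqrt (by positivity : 0 ≤ s ^ 2 + t ^ 2)
  have hcs : q * s + p * t ≤ √(p ^ 2 + q ^ 2) * √(s ^ 2 + t ^ 2) := by
    rw [← Real.sqrt_mul (by positivity)]
    exact Real.le_sqrt_of_sq_le (by nlinarith [sq_nonneg (q * t - p * s)])
  refine Real.sqrt_le_iff.2 ⟨by positivity, ?_⟩
  have h1 := pow_le_pow_left₀ hu0 hu 2
  have h2 := pow_le_pow_left₀ hv0 hv 2
  have h3 := mul_le_mul_of_nonneg_left hcs ha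
  calc u ^ 2 + v ^ 2 ≤ a ^ 2 * (p ^ 2 + q ^ 2) + 4 * (a * (q * s + p * t))
        + 4 * (s ^ 2 + t ^ 2) := by linarith
    _ ≤ a ^ 2 * √(p ^ 2 + q ^ 2) ^ 2 + 4 * (a * (√(p ^ 2 + q ^ 2) * √(s ^ 2 + t ^ 2)))
        + 4 * √(s ^ 2 + t ^ 2) ^ 2 := by rw [hD, hT]; linarith
    _ = _ := by ring

/-- Under positively adequate objectives (margin ρ), if an iterate is at distance
at least `2√(P1²+P2²)/ε` from an `F`-invariant finite set `S`, then one
best-response step contracts its distance to `S` by the factor `1 − ρ + ε`. -/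
theorem neighborhood_linear_convergence {nx ny : ℕ}
    (Q1 : Matrix (Fin nx) (Fin nx) ℝ) (Q2 : Matrix (Fin ny) (Fin ny) ℝ)
    (hQ1 : Q1.PosDef) (hQ2 : Q2.PosDef)
    (C1 : Matrix (Fin nx) (Fin ny) ℝ) (C2 : Matrix (Fin ny) (Fin nx) ℝ)
    (d1 : Fin nx → ℝ) (d2 : Fin ny → ℝ)
    (ρ : ℝ) (hρ0 : 0 < ρ) (hρ1 : ρ ≤ 1)
    (hR1 : ∀ v : Fin ny → ℝ, euclNorm ((Q1⁻¹ * C1) *ᵥ v) ≤ (1 - ρ) * euclNorm v)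
    (hR2 : ∀ w : Fin nx → ℝ, euclNorm ((Q2⁻¹ * C2) *ᵥ w) ≤ (1 - ρ) * euclNorm w)
    (P1 P2 : ℝ) (hP1 : IsProxBound Q1 P1) (hP2 : IsProxBound Q2 P2)
    (F : (Fin nx → ℤ) × (Fin ny → ℤ) → (Fin nx → ℤ) × (Fin ny → ℤ))
    (hF : ∀ z,
      (∀ w : Fin nx → ℤ,
        f1 Q1 C1 d1 (ic (F z).1) (ic z.2) ≤ f1 Q1 C1 d1 (ic w) (ic z.2)) ∧
      (∀ w : Fin ny → ℤ,
        f2 Q2 C2 d2 (ic z.1) (ic (F z).2) ≤ f2 Q2 C2 d2 (ic z.1) (ic w)))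
    (S : Finset ((Fin nx → ℤ) × (Fin ny → ℤ))) (hS : S.Nonempty)
    (hFS : ∀ z ∈ S, F z ∈ S)
    (ε : ℝ) (hε0 : 0 < ε) (hε : ε < ρ)
    (zh : (Fin nx → ℤ) × (Fin ny → ℤ)) (D D' : ℝ)
    (hD : IsLeast
      {d : ℝ | ∃ s ∈ S, d = pairNorm (ic zh.1 - ic s.1) (ic zh.2 - ic s.2)} D)
    (hfar : 2 * Real.sqrt (P1 ^ 2 + P2 ^ 2) / ε ≤ D)
    (hD' : IsLeast
      {d : ℝ | ∃ s ∈ S,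
        d = pairNorm (ic (F zh).1 - ic s.1) (ic (F zh).2 - ic s.2)} D') :
    D' ≤ (1 - ρ + ε) * D := by
  obtain ⟨⟨s, hs, rfl⟩, -⟩ := hD
  -- `F s` lies in `S`, so it bounds the distance of `F zh` to `S` from above.
  refine (hD'.2 ⟨F s, hFS s hs, rfl⟩).trans ?_
  have hx := best_response_dist_le hP1 hR1 (hF zh).1 (hF s).1
  have hy := best_response_dist_le hP2 hR2 (hF zh).2 (hF s).2
  have h := sqrt_swap_le (by linarith : 0 ≤ 1 - ρ) (euclNorm_nonneg _) (euclNorm_nonneg _) hx hy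
  rw [div_le_iff₀ hε0] at hfar
  unfold pairNorm at hfar ⊢
  linarith
end
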